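/- Let R = ℤ[x_1, …, x_l] be a polynomial ring in finitely many variables over ℤ, and suppose that the pair (EL_2(R) ⋉ V_4(R), V_4(R)) has relative property (T). Then the pair (EL_2(R[t]) ⋉ V_4(R[t]), V_4(R[t])), where R[t] is the polynomial ring in one further variable t over R, also has relative property (T). -/

import Mathlib

/-- The elementary matrix E₁₂(s) in SL₂(R). -/
def elem12 (R : Type) [CommRing R] (s : R) : Matrix.SpecialLinearGroup (Fin 2) R :=
  ⟨!![1, s; 0, 1], by simp [Matrix.det_fin_two_of]⟩

/-- The elementary matrix E₂₁(s) in SL₂(R). -/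
def elem21 (R : Type) [CommRing R] (s : R) : Matrix.SpecialLinearGroup (Fin 2) R :=
  ⟨!![1, 0; s, 1], by simp [Matrix.det_fin_two_of]⟩

/-- EL₂(R): the subgroup of SL₂(R) generated by the elementary matrices. -/
def EL2 (R : Type) [CommRing R] : Subgroup (Matrix.SpecialLinearGroup (Fin 2) R) :=
  Subgroup.closure (Set.range (elem12 R) ∪ Set.range (elem21 R))

/-- `V₄(R)`: the `R`-module of homogeneous polynomials of degree 3 in two variables. -/
noncomputable abbrev V4 (R : Type) [CommRing R] : Submodule R (MvPolynomial (Fin 2) R) :=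
  MvPolynomial.homogeneousSubmodule (Fin 2) R 3

/-- The substitution action of a matrix on a polynomial. -/
noncomputable def substAction (R : Type) [CommRing R]
    (M : Matrix (Fin 2) (Fin 2) R) (P : MvPolynomial (Fin 2) R) : MvPolynomial (Fin 2) R :=
  MvPolynomial.aeval (fun i : Fin 2 => ∑ j : Fin 2, MvPolynomial.C (M j i) * MvPolynomial.X j) P

/-- Relative property (T) for the pair `(Vmult ⋊[φ] H, Vmult)`. -/
def RelPropertyT {H N : Type} [Group H] [Group N] (φ : H →* MulAut N) : Prop :=
  ∃ (S : Finset (N ⋊[φ] H)) (ε : ℝ), 0 < ε ∧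
    ∀ (V : Type) [NormedAddCommGroup V] [InnerProductSpace ℂ V] [CompleteSpace V],
      ∀ (π : (N ⋊[φ] H) →* (V ≃ₗᵢ[ℂ] V)),
        (∃ v : V, ‖v‖ = 1 ∧ ∀ s ∈ S, ‖π s v - v‖ < ε) →
        ∃ v : V, v ≠ 0 ∧ ∀ x : N, π (SemidirectProduct.inl x) v = v

/-!
Let `N k` be the cubics over `R[t]` whose coefficients have degree less than `k`, and let `v` be an
almost invariant unit vector. Relative property (T) over `R`, applied to the copies `t ^ i V₄(R)`
with `i < 16`, shows that `v` is close to the vectors fixed by `N 16`.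

For `k ≥ 16`, `N (k + 1)` is generated by `T k`, the cubics `f X_a X_0²` with `deg f ≤ k`, and by
the analogous cubics `f X_a X_1²`. Let `σ` be the shear that adds `s X_0` to `X_1`, where `s` has
unit leading coefficient and degree between `1` and `8`. Expanding `σ (f X_1 X_0²)` and
`σ (f X_1³)`, and dividing `f` by `s` or `s²`, one finds that `N k` and `σ (N k)` together contain
`T k`. Hence `σ` maps the span `W` of the layers `V^{N k} ⊖ V^{T k}`, `k ≥ 16`, to a subspace
orthogonal to `W`. The shears with `s = t ^ i`, `0 ≤ i ≤ 8`, differ by such `σ`, so they move `W` to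
nine pairwise orthogonal subspaces, and as they almost fix `v`, its component in `W` has norm at
most about `1 / 3`. The same holds with `X_0` and `X_1` exchanged. A vector fixed by `N 16` and
orthogonal to both spans is fixed by every `N k`, so the fixed component of `v` does not vanish.
-/

section Projections

open Module.End

variable {𝕜 V : Type*} [RCLike 𝕜] [NormedAddCommGroup V] [InnerProductSpace 𝕜 V]

theorem orthogonal_mem_invtSubmodule_starProjection {U B : Submodule 𝕜 V}
    [U.HasOrthogonalProjection] (h : B ∈ invtSubmodule U.starProjection) :
    Bᗮ ∈ invtSubmodule U.starProjection :=
  U.starProjection_isSymmetric.orthogonalComplement_mem_invtSubmodule h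

theorem mem_invtSubmodule_orthogonal_starProjection {U B : Submodule 𝕜 V}
    [U.HasOrthogonalProjection] (h : B ∈ invtSubmodule U.starProjection) :
    B ∈ invtSubmodule Uᗮ.starProjection := by
  rw [mem_invtSubmodule_iff_forall_mem_of_mem] at h ⊢
  intro x hx
  rw [ContinuousLinearMap.coe_coe, Submodule.starProjection_orthogonal_val]
  exact B.sub_mem hx (h x hx)

theorem mem_invtSubmodule_starProjection_symm {U B : Submodule 𝕜 V}
    [U.HasOrthogonalProjection] [B.HasOrthogonalProjection]
    (h : B ∈ invtSubmodule U.starProjection) : U ∈ invtSubmodule B.starProjection := by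
  have hcomm : Commute B.starProjection U.starProjection :=
    (ContinuousLinearMap.IsIdempotentElem.commute_iff B.isIdempotentElem_starProjection).2 <| by
      rw [Submodule.range_starProjection, Submodule.ker_starProjection]
      exact ⟨h, orthogonal_mem_invtSubmodule_starProjection h⟩
  rw [mem_invtSubmodule_iff_forall_mem_of_mem]
  intro x hx
  have hfix : U.starProjection (B.starProjection x) = B.starProjection x := by
    have := congrArg (· x) hcomm.eq
    simpa [Submodule.starProjection_eq_self_iff.2 hx] using this.symm
  exact Submodule.starProjection_eq_self_iff.1 hfix

theorem iSup_mem_invtSubmodule {R M ι : Type*} [Semiring R] [AddCommMonoid M] [Module R M]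
    {f : Module.End R M} {B : ι → Submodule R M} (h : ∀ i, B i ∈ f.invtSubmodule) :
    ⨆ i, B i ∈ f.invtSubmodule :=
  iSup_le fun i ↦ (h i).trans (Submodule.comap_mono (le_iSup B i))

theorem norm_orthogonal_starProjection_le_norm_sub (U : Submodule 𝕜 V)
    [U.HasOrthogonalProjection] (v : V) {u : V} (hu : u ∈ U) :
    ‖Uᗮ.starProjection v‖ ≤ ‖v - u‖ := by
  have : Uᗮ.starProjection v = Uᗮ.starProjection (v - u) := by
    rw [map_sub, Submodule.starProjection_orthogonal_apply_eq_zero hu, sub_zero]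
  exact this ▸ Uᗮ.norm_starProjection_apply_le _

theorem norm_orthogonal_starProjection_le_add {U W Z : Submodule 𝕜 V}
    [U.HasOrthogonalProjection] [W.HasOrthogonalProjection] [Z.HasOrthogonalProjection]
    (hUW : W ∈ invtSubmodule U.starProjection) (hZ : U ⊓ W ≤ Z) (v : V) :
    ‖Zᗮ.starProjection v‖ ≤ ‖Uᗮ.starProjection v‖ + ‖Wᗮ.starProjection v‖ := by
  set u := U.starProjection (W.starProjection v)
  have hu : u ∈ Z := hZ ⟨U.starProjection_apply_mem _, hUW (W.starProjection_apply_mem v)⟩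
  have hvu : v - u = Uᗮ.starProjection v + U.starProjection (Wᗮ.starProjection v) := by
    simp only [u, Submodule.starProjection_orthogonal_val, map_sub]
    abel
  calc ‖Zᗮ.starProjection v‖ ≤ ‖v - u‖ := norm_orthogonal_starProjection_le_norm_sub Z v hu
    _ ≤ ‖Uᗮ.starProjection v‖ + ‖U.starProjection (Wᗮ.starProjection v)‖ :=
      hvu ▸ norm_add_le _ _
    _ ≤ ‖Uᗮ.starProjection v‖ + ‖Wᗮ.starProjection v‖ := by
      gcongr
      exact U.norm_starProjection_apply_le _

theorem inf_orthogonal_inf_orthogonal_le {U W : Submodule 𝕜 V} [W.HasOrthogonalProjection]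
    (h : U ∈ invtSubmodule W.starProjection) : U ⊓ (U ⊓ Wᗮ)ᗮ ≤ W := by
  rintro x ⟨hxU, hx⟩
  have hy : Wᗮ.starProjection x ∈ U ⊓ Wᗮ :=
    ⟨mem_invtSubmodule_orthogonal_starProjection h hxU, Wᗮ.starProjection_apply_mem x⟩
  have hself : inner 𝕜 (Wᗮ.starProjection x) (Wᗮ.starProjection x) = 0 := by
    rw [Submodule.inner_starProjection_left_eq_right,
      Submodule.starProjection_eq_self_iff.2 hy.2]
    exact Submodule.inner_left_of_mem_orthogonal hy hx
  rwa [inner_self_eq_zero, Submodule.starProjection_apply_eq_zero_iff,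
    Submodule.orthogonal_orthogonal] at hself

theorem le_norm_div_sqrt_card_of_orthonormal {ι : Type*} [Fintype ι] [Nonempty ι] {e : ι → V}
    (he : Orthonormal 𝕜 e) {v : V} {c : ℝ} (hc : ∀ i, c ≤ ‖inner 𝕜 (e i) v‖) :
    c ≤ ‖v‖ / √(Fintype.card ι) := by
  rcases le_total c 0 with hc0 | hc0
  · exact hc0.trans (by positivity)
  rw [le_div_iff₀ (by positivity)]
  refine le_of_sq_le_sq ?_ (norm_nonneg v)
  calc (c * √(Fintype.card ι)) ^ 2 = ∑ _i : ι, c ^ 2 := by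
        rw [mul_pow, Real.sq_sqrt (by positivity), Finset.sum_const, Finset.card_univ,
          nsmul_eq_mul, mul_comm]
    _ ≤ ∑ i, ‖inner 𝕜 (e i) v‖ ^ 2 := by gcongr with i; exact hc i
    _ ≤ ‖v‖ ^ 2 := he.sum_inner_products_le v

theorem norm_starProjection_le_of_pairwise_orthogonal {ι : Type*} [Fintype ι] [Nonempty ι]
    {W : Submodule 𝕜 V} [W.HasOrthogonalProjection] {u : ι → V ≃ₗᵢ[𝕜] V}
    (hu : Pairwise fun i j ↦ ∀ x ∈ W, ∀ y ∈ W, inner 𝕜 (u i x) (u j y) = 0)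
    {v : V} {δ : ℝ} (hv : ∀ i, ‖u i v - v‖ ≤ δ) :
    ‖W.starProjection v‖ ≤ δ + ‖v‖ / √(Fintype.card ι) := by
  set w := W.starProjection v with hw
  rcases eq_or_ne w 0 with h0 | h0
  · rw [h0, norm_zero]
    have := (norm_nonneg _).trans (hv (Classical.arbitrary ι))
    positivity
  set e : V := (‖w‖⁻¹ : 𝕜) • w with he
  have heW : e ∈ W := W.smul_mem _ (W.starProjection_apply_mem v)
  have he1 : ‖e‖ = 1 := norm_smul_inv_norm h0
  have horth : Orthonormal 𝕜 fun i ↦ u i e :=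
    ⟨fun i ↦ by rw [LinearIsometryEquiv.norm_map, he1], fun i j hij ↦ hu hij e heW e heW⟩
  have hev : ‖inner 𝕜 e v‖ = ‖w‖ := by
    have : inner 𝕜 e v = inner 𝕜 e w := by
      rw [hw, ← Submodule.inner_starProjection_left_eq_right,
        Submodule.starProjection_eq_self_iff.2 heW]
    rw [this, he, inner_smul_left, inner_self_eq_norm_sq_to_K]
    simp [pow_two, h0]
  refine sub_le_iff_le_add'.1 (le_norm_div_sqrt_card_of_orthonormal horth fun i ↦ ?_)
  calc ‖w‖ - δ ≤ ‖inner 𝕜 (u i e) (u i v)‖ - ‖inner 𝕜 (u i e) (u i v - v)‖ := by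
        rw [LinearIsometryEquiv.inner_map_map, hev]
        gcongr
        refine (norm_inner_le_norm _ _).trans ?_
        rw [LinearIsometryEquiv.norm_map, he1, one_mul]
        exact hv i
    _ ≤ ‖inner 𝕜 (u i e) (u i v) - inner 𝕜 (u i e) (u i v - v)‖ := norm_sub_norm_le _ _
    _ = ‖inner 𝕜 (u i e) v‖ := by rw [← inner_sub_right, sub_sub_cancel]

end Projections

section FixedVectors

open Module.End

variable {𝕜 V Γ : Type*} [RCLike 𝕜] [NormedAddCommGroup V] [InnerProductSpace 𝕜 V] [Group Γ]

/-- The closed subspace of vectors fixed by a subgroup `L` in a unitary representation `π`. -/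
def fixedVectors (π : Γ →* (V ≃ₗᵢ[𝕜] V)) (L : Subgroup Γ) : Submodule 𝕜 V where
  carrier := {v | ∀ g ∈ L, π g v = v}
  add_mem' hv hw g hg := by rw [map_add, hv g hg, hw g hg]
  zero_mem' _ _ := map_zero _
  smul_mem' c v hv g hg := by rw [map_smul, hv g hg]

variable (π : Γ →* (V ≃ₗᵢ[𝕜] V))

theorem unitary_mul_apply (g h : Γ) (v : V) : π (g * h) v = π g (π h v) := by
  rw [map_mul, LinearIsometryEquiv.coe_mul, Function.comp_apply]

theorem unitary_apply_inv_apply (g : Γ) (v : V) : π g (π g⁻¹ v) = v := by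
  rw [← unitary_mul_apply, mul_inv_cancel, map_one, LinearIsometryEquiv.coe_one, id_eq]

theorem inner_unitary_apply_left (g : Γ) (v w : V) : inner 𝕜 (π g v) w = inner 𝕜 v (π g⁻¹ w) := by
  rw [← (π g).inner_map_map v, unitary_apply_inv_apply]

theorem mem_fixedVectors {L : Subgroup Γ} {v : V} :
    v ∈ fixedVectors π L ↔ ∀ g ∈ L, π g v = v := Iff.rfl

theorem fixedVectors_antitone : Antitone (fixedVectors π) :=
  fun _ _ h _ hv g hg ↦ hv g (h hg)

theorem fixedVectors_bot : fixedVectors π ⊥ = ⊤ :=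
  eq_top_iff.2 fun v _ g hg ↦ by
    rw [Subgroup.mem_bot.1 hg, map_one, LinearIsometryEquiv.coe_one, id_eq]

theorem fixedVectors_comp {Δ : Type*} [Group Δ] (f : Δ →* Γ) (L : Subgroup Δ) :
    fixedVectors (π.comp f) L = fixedVectors π (L.map f) :=
  Submodule.ext fun v ↦ by simp [mem_fixedVectors]

theorem mem_fixedVectors_iSup {ι : Sort*} {L : ι → Subgroup Γ} {v : V} :
    v ∈ fixedVectors π (⨆ i, L i) ↔ ∀ i, v ∈ fixedVectors π (L i) := by
  refine ⟨fun hv i ↦ fixedVectors_antitone π (le_iSup L i) hv, fun hv g hg ↦ ?_⟩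
  induction hg using Subgroup.iSup_induction' with
  | hp i g hg => exact hv i g hg
  | h1 => simp
  | hmul g h _ _ hgv hhv => rw [unitary_mul_apply, hhv, hgv]

theorem fixedVectors_sup (L M : Subgroup Γ) :
    fixedVectors π (L ⊔ M) = fixedVectors π L ⊓ fixedVectors π M := by
  ext v
  rw [sup_eq_iSup, mem_fixedVectors_iSup]
  simp [and_comm]

theorem isClosed_fixedVectors (L : Subgroup Γ) : IsClosed (fixedVectors π L : Set V) := by
  have : (fixedVectors π L : Set V) = ⋂ g ∈ L, {v | π g v = v} := by
    ext v
    simp [mem_fixedVectors]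
  rw [this]
  exact isClosed_biInter fun g _ ↦ isClosed_eq (π g).continuous continuous_id

instance [CompleteSpace V] (L : Subgroup Γ) : (fixedVectors π L).HasOrthogonalProjection :=
  have := (isClosed_fixedVectors π L).completeSpace_coe
  inferInstance

theorem apply_mem_fixedVectors {L : Subgroup Γ} [L.Normal] (g : Γ) {v : V}
    (hv : v ∈ fixedVectors π L) : π g v ∈ fixedVectors π L := by
  intro a ha
  have hconj : g⁻¹ * a * g ∈ L := by
    simpa using ‹L.Normal›.conj_mem a ha g⁻¹
  calc π a (π g v) = π g (π (g⁻¹ * a * g) v) := by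
        simp only [← unitary_mul_apply, mul_assoc, mul_inv_cancel_left]
    _ = π g v := by rw [hv _ hconj]

variable {π} in
theorem unitary_apply_mem_orthogonal {W : Submodule 𝕜 V} (hW : ∀ g, ∀ x ∈ W, π g x ∈ W)
    (g : Γ) {v : V} (hv : v ∈ Wᗮ) : π g v ∈ Wᗮ := by
  intro x hx
  rw [inner_eq_zero_symm, inner_unitary_apply_left, inner_eq_zero_symm]
  exact hv _ (hW g⁻¹ x hx)

variable {π} in
theorem unitary_apply_starProjection {W : Submodule 𝕜 V} [W.HasOrthogonalProjection]
    (hW : ∀ g, ∀ x ∈ W, π g x ∈ W) (g : Γ) (v : V) :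
    π g (W.starProjection v) = W.starProjection (π g v) := by
  refine (Submodule.eq_starProjection_of_mem_orthogonal
    (hW g _ (W.starProjection_apply_mem v)) ?_).symm
  rw [← map_sub]
  exact unitary_apply_mem_orthogonal hW g (W.sub_starProjection_mem_orthogonal v)

theorem fixedVectors_mem_invtSubmodule_starProjection {A : Type*} [CommGroup A] [CompleteSpace V]
    (π : A →* (V ≃ₗᵢ[𝕜] V)) (L M : Subgroup A) :
    fixedVectors π L ∈ invtSubmodule (fixedVectors π M).starProjection := by
  intro v hv a ha
  rw [ContinuousLinearMap.coe_coe,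
    unitary_apply_starProjection (fun b _ hw ↦ apply_mem_fixedVectors π b hw), hv a ha]

end FixedVectors

section Layers

open Module.End

variable {𝕜 V A : Type*} [RCLike 𝕜] [NormedAddCommGroup V] [InnerProductSpace 𝕜 V] [CommGroup A]
  (ρ : A →* (V ≃ₗᵢ[𝕜] V)) (N T T' : ℕ → Subgroup A)

/-- The vectors that `N k` fixes and that are orthogonal to the vectors fixed by `T k`. For a
filtration `N` whose step from `N k` to `N (k + 1)` is generated by families such as `T k`, these
subspaces control the vectors that are fixed by `N 0` but not by every `N k`. -/
def layer (k : ℕ) : Submodule 𝕜 V :=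
  fixedVectors ρ (N k) ⊓ (fixedVectors ρ (T k))ᗮ

/-- The span of all layers of a filtration `N` with respect to a family `T`. -/
def layerSpan : Submodule 𝕜 V :=
  ⨆ k, layer ρ N T k

variable {N T T'}

variable {ρ} in
theorem layerSpan_mem_invtSubmodule {U : Submodule 𝕜 V} [U.HasOrthogonalProjection]
    (hU : ∀ L, fixedVectors ρ L ∈ invtSubmodule U.starProjection) :
    layerSpan ρ N T ∈ invtSubmodule U.starProjection :=
  iSup_mem_invtSubmodule fun k ↦
    invtSubmodule.inf_mem (hU (N k)) (orthogonal_mem_invtSubmodule_starProjection (hU (T k)))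

variable [CompleteSpace V]

theorem orthogonal_layerSpan_mem_invtSubmodule (L : Subgroup A) :
    (layerSpan ρ N T)ᗮ ∈ invtSubmodule (fixedVectors ρ L).starProjection :=
  orthogonal_mem_invtSubmodule_starProjection <|
    layerSpan_mem_invtSubmodule fun M ↦ fixedVectors_mem_invtSubmodule_starProjection ρ M L

theorem orthogonal_layerSpan_mem_invtSubmodule_orthogonal_layerSpan :
    (layerSpan ρ N T')ᗮ ∈ invtSubmodule (layerSpan ρ N T)ᗮ.starProjection :=
  orthogonal_mem_invtSubmodule_starProjection <| layerSpan_mem_invtSubmodule fun L ↦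
    mem_invtSubmodule_starProjection_symm (orthogonal_layerSpan_mem_invtSubmodule ρ L)

theorem fixedVectors_inf_orthogonal_layerSpan_le (k : ℕ) :
    fixedVectors ρ (N k) ⊓ (layerSpan ρ N T)ᗮ ≤ fixedVectors ρ (T k) :=
  (inf_le_inf_left _ (Submodule.orthogonal_le (le_iSup (layer ρ N T) k))).trans <|
    inf_orthogonal_inf_orthogonal_le (fixedVectors_mem_invtSubmodule_starProjection ρ _ _)

theorem fixedVectors_inf_orthogonal_layerSpan_sup_le (hN : ∀ k, N (k + 1) ≤ T k ⊔ T' k) :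
    fixedVectors ρ (N 0) ⊓ (layerSpan ρ N T ⊔ layerSpan ρ N T')ᗮ ≤
      fixedVectors ρ (⨆ k, N k) := by
  rintro v ⟨hv0, hv⟩
  rw [SetLike.mem_coe, ← Submodule.inf_orthogonal] at hv
  refine (mem_fixedVectors_iSup ρ).2 fun k ↦ ?_
  induction k with
  | zero => exact hv0
  | succ k hvk =>
    refine fixedVectors_antitone ρ (hN k) ?_
    rw [fixedVectors_sup]
    exact ⟨fixedVectors_inf_orthogonal_layerSpan_le ρ k ⟨hvk, hv.1⟩,
      fixedVectors_inf_orthogonal_layerSpan_le ρ k ⟨hvk, hv.2⟩⟩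

theorem norm_orthogonal_fixedVectors_iSup_le (hN : ∀ k, N (k + 1) ≤ T k ⊔ T' k) (v : V) :
    ‖(fixedVectors ρ (⨆ k, N k))ᗮ.starProjection v‖ ≤
      ‖(fixedVectors ρ (N 0))ᗮ.starProjection v‖ +
        (‖(layerSpan ρ N T)ᗮᗮ.starProjection v‖ + ‖(layerSpan ρ N T')ᗮᗮ.starProjection v‖) := by
  have hsup : (layerSpan ρ N T)ᗮ ⊓ (layerSpan ρ N T')ᗮ = (layerSpan ρ N T ⊔ layerSpan ρ N T')ᗮ :=
    Submodule.inf_orthogonal _ _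
  have hinv : (layerSpan ρ N T ⊔ layerSpan ρ N T')ᗮ ∈
      invtSubmodule (fixedVectors ρ (N 0)).starProjection :=
    hsup ▸ invtSubmodule.inf_mem (orthogonal_layerSpan_mem_invtSubmodule ρ _)
      (orthogonal_layerSpan_mem_invtSubmodule ρ _)
  refine (norm_orthogonal_starProjection_le_add hinv
    (fixedVectors_inf_orthogonal_layerSpan_sup_le ρ hN) v).trans ?_
  gcongr
  exact norm_orthogonal_starProjection_le_add
    (orthogonal_layerSpan_mem_invtSubmodule_orthogonal_layerSpan ρ) hsup.le v

theorem norm_orthogonal_fixedVectors_le_nsmul {J : ℕ → Subgroup A} (h0 : N 0 = ⊥)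
    (hN : ∀ k, N (k + 1) ≤ N k ⊔ J k) {v : V} {δ : ℝ} (n : ℕ)
    (hv : ∀ k < n, ‖(fixedVectors ρ (J k))ᗮ.starProjection v‖ ≤ δ) :
    ‖(fixedVectors ρ (N n))ᗮ.starProjection v‖ ≤ n * δ := by
  induction n with
  | zero => simp [h0, fixedVectors_bot]
  | succ n ih =>
    have hinf : fixedVectors ρ (N n) ⊓ fixedVectors ρ (J n) ≤ fixedVectors ρ (N (n + 1)) :=
      (fixedVectors_sup ρ _ _).ge.trans (fixedVectors_antitone ρ (hN n))
    refine (norm_orthogonal_starProjection_le_add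
      (fixedVectors_mem_invtSubmodule_starProjection ρ _ _) hinf v).trans ?_
    push_cast
    rw [add_one_mul]
    gcongr
    · exact ih fun k hk ↦ hv k (hk.trans n.lt_succ_self)
    · exact hv n n.lt_succ_self

end Layers

section PingPong

open SemidirectProduct

variable {𝕜 V A H : Type*} [RCLike 𝕜] [NormedAddCommGroup V] [InnerProductSpace 𝕜 V]
  [CommGroup A] [Group H] {φ : H →* MulAut A} (π : A ⋊[φ] H →* (V ≃ₗᵢ[𝕜] V))
  {N T : ℕ → Subgroup A}

theorem apply_inr_mem_fixedVectors (h : H) {L : Subgroup A} {v : V}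
    (hv : v ∈ fixedVectors (π.comp inl) L) :
    π (inr h) v ∈ fixedVectors (π.comp inl) (L.map (φ h).toMonoidHom) := by
  rintro _ ⟨a, ha, rfl⟩
  calc π (inl (φ h a)) (π (inr h) v) = π (inr h) (π (inl a) v) := by
        rw [inl_aut, ← unitary_mul_apply, ← unitary_mul_apply, map_inv, inv_mul_cancel_right]
    _ = π (inr h) v := congrArg (π (inr h)) (hv a ha)

theorem inner_eq_zero_of_mem_orthogonal_orthogonal {B C : Submodule 𝕜 V} {u : V ≃ₗᵢ[𝕜] V}
    (h : ∀ x ∈ B, ∀ y ∈ C, inner 𝕜 (u x) y = 0) {x y : V} (hx : x ∈ Bᗮᗮ) (hy : y ∈ Cᗮᗮ) :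
    inner 𝕜 (u x) y = 0 := by
  have hB : ∀ x ∈ B, u x ∈ Cᗮ := fun x hx y hy ↦ inner_eq_zero_symm.1 (h x hx y hy)
  have hy' : u.symm y ∈ Bᗮ := fun x hx ↦ by
    rw [← u.inner_map_map, u.apply_symm_apply]
    exact hy _ (hB x hx)
  rw [← u.symm.inner_map_map, u.symm_apply_apply]
  exact inner_eq_zero_symm.1 (hx _ hy')

variable [CompleteSpace V]

theorem inner_inr_layer_eq_zero (hN : Monotone N) {h : H} {k k' : ℕ} (hk : k' ≤ k)
    (hT : T k' ≤ N k' ⊔ (N k').map (φ h).toMonoidHom) {x y : V}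
    (hx : x ∈ layer (π.comp inl) N T k) (hy : y ∈ layer (π.comp inl) N T k') :
    inner 𝕜 (π (inr h) x) y = 0 := by
  set U := fixedVectors (π.comp inl) (N k')
  have hhx : π (inr h) x ∈ fixedVectors (π.comp inl) ((N k').map (φ h).toMonoidHom) :=
    apply_inr_mem_fixedVectors π h (fixedVectors_antitone _ (hN hk) hx.1)
  have hproj : U.starProjection (π (inr h) x) ∈ fixedVectors (π.comp inl) (T k') := by
    refine fixedVectors_antitone _ hT ?_
    rw [fixedVectors_sup]
    exact ⟨U.starProjection_apply_mem _,
      fixedVectors_mem_invtSubmodule_starProjection _ _ _ hhx⟩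
  rw [← Submodule.starProjection_eq_self_iff.2 hy.1,
    ← Submodule.inner_starProjection_left_eq_right]
  exact hy.2 _ hproj

theorem inner_inr_layerSpan_eq_zero (hN : Monotone N) {h : H}
    (hT : ∀ k, T k ≤ N k ⊔ (N k).map (φ h).toMonoidHom)
    (hT' : ∀ k, T k ≤ N k ⊔ (N k).map (φ h⁻¹).toMonoidHom) {x y : V}
    (hx : x ∈ layerSpan (π.comp inl) N T) (hy : y ∈ layerSpan (π.comp inl) N T) :
    inner 𝕜 (π (inr h) x) y = 0 := by
  induction hx using Submodule.iSup_induction' with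
  | zero => simp
  | add x x' _ _ hx hx' => rw [map_add, inner_add_left, hx, hx', add_zero]
  | mem k x hx =>
    induction hy using Submodule.iSup_induction' with
    | zero => simp
    | add y y' _ _ hy hy' => rw [inner_add_right, hy, hy', add_zero]
    | mem k' y hy =>
      rcases le_total k' k with hk | hk
      · exact inner_inr_layer_eq_zero π hN hk (hT k') hx hy
      · rw [inner_unitary_apply_left, ← map_inv]
        exact inner_eq_zero_symm.1 (inner_inr_layer_eq_zero π hN hk (hT' k) hy hx)

theorem norm_layerSpan_starProjection_le {ι : Type*} [Fintype ι] [Nonempty ι] (hN : Monotone N)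
    {g : ι → H}
    (hg : Pairwise fun i j ↦ ∀ k, T k ≤ N k ⊔ (N k).map (φ ((g i)⁻¹ * g j)).toMonoidHom)
    {v : V} {δ : ℝ} (hv : ∀ i, ‖π (inr (g i)) v - v‖ ≤ δ) :
    ‖(layerSpan (π.comp inl) N T)ᗮᗮ.starProjection v‖ ≤ δ + ‖v‖ / √(Fintype.card ι) := by
  refine norm_starProjection_le_of_pairwise_orthogonal (fun i j hij x hx y hy ↦ ?_) hv
  rw [inner_unitary_apply_left, ← unitary_mul_apply, ← map_inv, ← map_mul, inner_eq_zero_symm]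
  refine inner_eq_zero_of_mem_orthogonal_orthogonal
    (fun x hx y hy ↦ inner_inr_layerSpan_eq_zero π hN (hg hij) ?_ hx hy) hy hx
  simpa only [mul_inv_rev, inv_inv] using hg hij.symm

end PingPong

section KazhdanPairs

open SemidirectProduct

/-- The restriction of a unitary representation to an invariant subspace. -/
def restrictUnitary {𝕜 V Γ : Type*} [RCLike 𝕜] [NormedAddCommGroup V] [InnerProductSpace 𝕜 V]
    [Group Γ] (π : Γ →* (V ≃ₗᵢ[𝕜] V)) (W : Submodule 𝕜 V) (hW : ∀ g, ∀ x ∈ W, π g x ∈ W) :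
    Γ →* (W ≃ₗᵢ[𝕜] W) where
  toFun g :=
    { (π g).toLinearMap.restrict (hW g) with
      invFun := (π g⁻¹).toLinearMap.restrict (hW g⁻¹)
      left_inv := fun x ↦ Subtype.ext (by simp)
      right_inv := fun x ↦ Subtype.ext (unitary_apply_inv_apply π g x)
      norm_map' := fun x ↦ (π g).norm_map x }
  map_one' := by ext; simp
  map_mul' g h := by ext x; exact unitary_mul_apply π g h x

theorem apply_mem_fixedVectors_inl_top {𝕜 V H N : Type*} [RCLike 𝕜] [NormedAddCommGroup V]
    [InnerProductSpace 𝕜 V] [Group H] [Group N] {φ : H →* MulAut N}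
    (π : N ⋊[φ] H →* (V ≃ₗᵢ[𝕜] V)) (g : N ⋊[φ] H) {v : V}
    (hv : v ∈ fixedVectors (π.comp inl) ⊤) : π g v ∈ fixedVectors (π.comp inl) ⊤ := by
  rw [fixedVectors_comp, ← MonoidHom.range_eq_map, range_inl_eq_ker_rightHom] at hv ⊢
  exact apply_mem_fixedVectors π g hv

theorem relPropertyT_of_subsingleton {H N : Type} [Group H] [Group N] [Subsingleton N]
    (φ : H →* MulAut N) : RelPropertyT φ := by
  refine ⟨∅, 1, one_pos, fun V _ _ _ π ⟨v, hv, _⟩ ↦ ⟨v, ?_, fun x ↦ ?_⟩⟩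
  · exact norm_ne_zero_iff.1 (hv ▸ one_ne_zero)
  · simp [Subsingleton.elim x 1]

/-- `S` and `ε` witness relative property (T) of the pair `(N ⋊[φ] H, N)`. -/
def IsKazhdanPair {H N : Type} [Group H] [Group N] (φ : H →* MulAut N) (S : Finset (N ⋊[φ] H))
    (ε : ℝ) : Prop :=
  ∀ (V : Type) [NormedAddCommGroup V] [InnerProductSpace ℂ V] [CompleteSpace V],
    ∀ (π : (N ⋊[φ] H) →* (V ≃ₗᵢ[ℂ] V)),
      (∃ v : V, ‖v‖ = 1 ∧ ∀ s ∈ S, ‖π s v - v‖ < ε) →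
      ∃ v : V, v ≠ 0 ∧ ∀ x : N, π (SemidirectProduct.inl x) v = v

variable {H N : Type} [Group H] [Group N] {φ : H →* MulAut N} {S : Finset (N ⋊[φ] H)} {ε : ℝ}
  {V : Type} [NormedAddCommGroup V] [InnerProductSpace ℂ V] [CompleteSpace V]
  (π : N ⋊[φ] H →* (V ≃ₗᵢ[ℂ] V))

theorem IsKazhdanPair.exists_ne_zero_mem_fixedVectors (hS : IsKazhdanPair φ S ε) {v : V}
    (hv0 : v ≠ 0) (hv : ∀ s ∈ S, ‖π s v - v‖ < ε * ‖v‖) :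
    ∃ w ≠ 0, w ∈ fixedVectors (π.comp inl) ⊤ := by
  obtain ⟨w, hw0, hw⟩ := hS V π ⟨(‖v‖⁻¹ : ℂ) • v, norm_smul_inv_norm hv0, fun s hs ↦ by
    rw [map_smul, ← smul_sub, norm_smul, norm_inv, Complex.norm_real, norm_norm,
      inv_mul_lt_iff₀ (norm_pos_iff.2 hv0), mul_comm]
    exact hv s hs⟩
  exact ⟨w, hw0, fun x _ ↦ hw x⟩

theorem IsKazhdanPair.norm_orthogonal_starProjection_le (hS : IsKazhdanPair φ S ε) (hε : 0 ≤ ε)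
    {v : V} {δ : ℝ} (hδ : 0 ≤ δ) (hv : ∀ s ∈ S, ‖π s v - v‖ < ε * δ) :
    ‖(fixedVectors (π.comp inl) ⊤)ᗮ.starProjection v‖ ≤ δ := by
  set F := fixedVectors (π.comp inl) ⊤
  have hF : ∀ g, ∀ x ∈ Fᗮ, π g x ∈ Fᗮ := fun g _ hx ↦
    unitary_apply_mem_orthogonal (fun g _ ↦ apply_mem_fixedVectors_inl_top π g) g hx
  by_contra! hlt
  set w : Fᗮ := ⟨Fᗮ.starProjection v, Fᗮ.starProjection_apply_mem v⟩
  have hw0 : w ≠ 0 := norm_pos_iff.1 (hδ.trans_lt hlt)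
  have hw : ∀ s ∈ S, ‖restrictUnitary π Fᗮ hF s w - w‖ < ε * ‖w‖ := fun s hs ↦
    calc ‖restrictUnitary π Fᗮ hF s w - w‖ = ‖Fᗮ.starProjection (π s v - v)‖ := by
          rw [map_sub, ← unitary_apply_starProjection hF]
          rfl
      _ ≤ ‖π s v - v‖ := Fᗮ.norm_starProjection_apply_le _
      _ < ε * δ := hv s hs
      _ ≤ ε * ‖w‖ := by gcongr; exact hlt.le
  obtain ⟨z, hz0, hz⟩ := hS.exists_ne_zero_mem_fixedVectors (restrictUnitary π Fᗮ hF) hw0 hw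
  have hzF : (z : V) ∈ F := fun x hx ↦ congrArg Subtype.val (hz x hx)
  exact hz0 (Subtype.ext (Submodule.disjoint_def.1 F.orthogonal_disjoint z hzF z.2))

end KazhdanPairs

section BinaryCubics

open MvPolynomial

variable {R : Type} [CommRing R]

/-- The binary cubics `f X_a X_b²`. -/
noncomputable def cubic (a b : Fin 2) : R →ₗ[R] V4 R :=
  LinearMap.toSpanSingleton R (V4 R)
    ⟨X a * X b ^ 2, (isHomogeneous_X R a).mul ((isHomogeneous_X R b).pow 2)⟩

theorem coe_cubic (a b : Fin 2) (f : R) :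
    (cubic a b f : MvPolynomial (Fin 2) R) = C f * X a * X b ^ 2 := by
  rw [mul_assoc, ← smul_eq_C_mul]
  rfl

theorem exists_monomial_eq_cubic {m : Fin 2 →₀ ℕ} (hm : m.degree = 3) :
    ∃ a b : Fin 2, ∀ f : R, monomial m f = cubic a b f := by
  have hm' : m 0 + m 1 = 3 := by
    rw [← hm, Finsupp.degree_eq_sum, Fin.sum_univ_two]
  obtain ⟨a, b, rfl⟩ : ∃ a b : Fin 2, m = Finsupp.single a 1 + Finsupp.single b 2 := by
    refine ⟨if m 0 % 2 = 1 then 0 else 1, if 2 ≤ m 0 then 0 else 1, ?_⟩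
    have : m 0 ≤ 3 := by omega
    ext i
    fin_cases i <;> interval_cases h0 : m 0 <;> simp <;> omega
  refine ⟨a, b, fun f ↦ ?_⟩
  rw [coe_cubic, X_pow_eq_monomial, X, mul_assoc, monomial_mul, C_mul_monomial]
  simp

theorem eq_top_of_cubic_mem {L : AddSubgroup (V4 R)} (hL : ∀ a b f, cubic a b f ∈ L) :
    L = ⊤ := by
  refine eq_top_iff.2 fun P _ ↦ ?_
  suffices (P : MvPolynomial (Fin 2) R) ∈ L.map (V4 R).subtype.toAddMonoidHom by
    simpa using this
  rw [as_sum P.1]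
  refine AddSubgroup.sum_mem _ fun m hm ↦ ?_
  obtain ⟨a, b, hab⟩ := exists_monomial_eq_cubic (R := R) (m := m) <| by
    rw [Finsupp.degree_eq_weight_one (R := ℕ)]
    exact P.2 (mem_support_iff.1 hm)
  rw [hab]
  exact AddSubgroup.mem_map_of_mem _ (hL a b _)

theorem substAction_X (M : Matrix (Fin 2) (Fin 2) R) (i : Fin 2) :
    substAction R M (X i) = ∑ j, C (M j i) * X j :=
  aeval_X _ i

theorem substAction_C_mul_X_mul_X_sq (M : Matrix (Fin 2) (Fin 2) R) (a b : Fin 2) (f : R) :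
    substAction R M (C f * X a * X b ^ 2) =
      C f * substAction R M (X a) * substAction R M (X b) ^ 2 := by
  simp only [substAction, map_mul, map_pow]
  rw [← algebraMap_eq, AlgHom.commutes]

namespace EL2

/-- The elementary substitution `X_i ↦ X_i + s X_j` for `i ≠ j`. -/
def shear (j : Fin 2) (s : R) : EL2 R :=
  if j = 0 then ⟨elem12 R s, Subgroup.subset_closure (Or.inl ⟨s, rfl⟩)⟩
  else ⟨elem21 R s, Subgroup.subset_closure (Or.inr ⟨s, rfl⟩)⟩

theorem shear_add (j : Fin 2) (s t : R) : shear j (s + t) = shear j s * shear j t := by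
  refine Subtype.ext (Subtype.ext ?_)
  fin_cases j
  · change !![1, s + t; 0, 1] = !![1, s; 0, 1] * !![1, t; 0, 1]
    simp [add_comm]
  · change !![1, 0; s + t, 1] = !![1, 0; s, 1] * !![1, 0; t, 1]
    simp

theorem inv_shear_mul_shear (j : Fin 2) (s t : R) :
    (shear j s)⁻¹ * shear j t = shear j (t - s) := by
  rw [inv_mul_eq_iff_eq_mul, ← shear_add, add_sub_cancel]

theorem substAction_shear_X {i j : Fin 2} (hij : i ≠ j) (s : R) :
    substAction R (shear j s : Matrix.SpecialLinearGroup (Fin 2) R) (X i) = X i + C s * X j := by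
  fin_cases i <;> fin_cases j <;>
    simp_all [substAction_X, shear, elem12, elem21, Fin.sum_univ_two, add_comm]

theorem substAction_shear_X_self (j : Fin 2) (s : R) :
    substAction R (shear j s : Matrix.SpecialLinearGroup (Fin 2) R) (X j) = X j := by
  fin_cases j <;> simp [substAction_X, shear, elem12, elem21, Fin.sum_univ_two]

end EL2

section

variable {i j : Fin 2} {s : R} {σ : V4 R → V4 R}
  (hσ : ∀ P, (σ P : MvPolynomial (Fin 2) R) =
    substAction R (EL2.shear j s : Matrix.SpecialLinearGroup (Fin 2) R) P)
include hσ

theorem cubic_self_mul_eq (hij : i ≠ j) (f : R) :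
    cubic j j (s * f) = σ (cubic i j f) - cubic i j f := by
  ext1
  simp only [AddSubgroupClass.coe_sub, hσ, coe_cubic, substAction_C_mul_X_mul_X_sq,
    EL2.substAction_shear_X hij, EL2.substAction_shear_X_self, C_mul]
  ring

theorem cubic_sq_mul_eq (hij : i ≠ j) (f : R) :
    cubic i j (s ^ 2 * f) = σ (cubic i i f) - cubic i i f - σ (cubic j i (s * f)) -
      2 • cubic j i (s * f) := by
  ext1
  simp only [two_nsmul, AddSubgroupClass.coe_sub, Submodule.coe_add, hσ, coe_cubic,
    substAction_C_mul_X_mul_X_sq, EL2.substAction_shear_X hij, EL2.substAction_shear_X_self]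
  simp only [C_mul, C_pow]
  ring

end

end BinaryCubics

section BaseChange

variable {R S : Type} [CommRing R] [CommRing S]

theorem EL2_le_comap_map (f : R →+* S) :
    EL2 R ≤ (EL2 S).comap (Matrix.SpecialLinearGroup.map f) := by
  refine (Subgroup.closure_le _).2 ?_
  rintro _ (⟨s, rfl⟩ | ⟨s, rfl⟩)
  · refine Subgroup.subset_closure (Or.inl ⟨f s, Subtype.ext ?_⟩)
    change !![1, f s; 0, 1] = (!![1, s; 0, 1] : Matrix (Fin 2) (Fin 2) R).map f
    simp [← Matrix.ext_iff, Fin.forall_fin_two]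
  · refine Subgroup.subset_closure (Or.inr ⟨f s, Subtype.ext ?_⟩)
    change !![1, 0; f s, 1] = (!![1, 0; s, 1] : Matrix (Fin 2) (Fin 2) R).map f
    simp [← Matrix.ext_iff, Fin.forall_fin_two]

/-- The homomorphism `EL₂(R) → EL₂(S)` induced by a ring homomorphism `R → S`. -/
def EL2.map (f : R →+* S) : EL2 R →* EL2 S :=
  ((Matrix.SpecialLinearGroup.map f).domRestrict (EL2 R)).codRestrict (EL2 S) fun g ↦
    EL2_le_comap_map f g.2

/-- The map `P ↦ c f(P)`, where `f : R → S` acts on coefficients and `c : S`. -/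
noncomputable def V4.scaledMap (f : R →+* S) (c : S) : V4 R →+ V4 S where
  toFun P := c • ⟨MvPolynomial.map f P.1, MvPolynomial.IsHomogeneous.map P.2 f⟩
  map_zero' := by ext1; simp
  map_add' P Q := by ext1; simp

theorem V4.coe_scaledMap (f : R →+* S) (c : S) (P : V4 R) :
    (V4.scaledMap f c P : MvPolynomial (Fin 2) S) = MvPolynomial.C c * MvPolynomial.map f P :=
  MvPolynomial.smul_eq_C_mul _ _

theorem V4.scaledMap_cubic (f : R →+* S) (c : S) (a b : Fin 2) (r : R) :
    V4.scaledMap f c (cubic a b r) = cubic a b (c * f r) := by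
  ext1
  simp only [V4.coe_scaledMap, coe_cubic, map_mul, map_pow, MvPolynomial.map_C,
    MvPolynomial.map_X, mul_assoc]

theorem substAction_C_mul (M : Matrix (Fin 2) (Fin 2) R) (c : R) (P : MvPolynomial (Fin 2) R) :
    substAction R M (MvPolynomial.C c * P) = MvPolynomial.C c * substAction R M P := by
  rw [← MvPolynomial.smul_eq_C_mul, ← MvPolynomial.smul_eq_C_mul]
  exact map_smul _ c P

theorem substAction_map (f : R →+* S) (M : Matrix (Fin 2) (Fin 2) R)
    (P : MvPolynomial (Fin 2) R) :
    substAction S (M.map f) (MvPolynomial.map f P) = MvPolynomial.map f (substAction R M P) := by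
  refine .trans ?_ (MvPolynomial.map_eval₂ f _ P).symm
  refine congrArg (fun x ↦ MvPolynomial.eval₂ _ x _) (funext fun i ↦ ?_)
  simp

/-- The homomorphism `φ` describes the action of `EL₂(R)` on `V₄(R)` by substitution. -/
def IsSubstAction (φ : EL2 R →* MulAut (Multiplicative (V4 R))) : Prop :=
  ∀ (g : EL2 R) (P : V4 R), ((φ g (Multiplicative.ofAdd P)).toAdd : MvPolynomial (Fin 2) R) =
    substAction R ((g : Matrix.SpecialLinearGroup (Fin 2) R) : Matrix (Fin 2) (Fin 2) R) P

variable {φ : EL2 R →* MulAut (Multiplicative (V4 R))}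
  {ψ : EL2 S →* MulAut (Multiplicative (V4 S))}

theorem scaledMap_apply (hφ : IsSubstAction φ) (hψ : IsSubstAction ψ) (f : R →+* S) (c : S)
    (g : EL2 R) (P : V4 R) :
    V4.scaledMap f c (φ g (Multiplicative.ofAdd P)).toAdd =
      (ψ (EL2.map f g) (Multiplicative.ofAdd (V4.scaledMap f c P))).toAdd := by
  ext1
  rw [V4.coe_scaledMap, hφ, ← substAction_map, ← substAction_C_mul, hψ, V4.coe_scaledMap]
  rfl

/-- The homomorphism `EL₂(R) ⋉ V₄(R) → EL₂(S) ⋉ V₄(S)` induced by a ring homomorphism `R → S`,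
multiplied by `c` on the module. -/
noncomputable def semidirectScaledMap (hφ : IsSubstAction φ) (hψ : IsSubstAction ψ) (f : R →+* S)
    (c : S) : Multiplicative (V4 R) ⋊[φ] EL2 R →* Multiplicative (V4 S) ⋊[ψ] EL2 S :=
  SemidirectProduct.map (V4.scaledMap f c).toMultiplicative (EL2.map f) fun g ↦
    MonoidHom.ext fun P ↦ congrArg Multiplicative.ofAdd (scaledMap_apply hφ hψ f c g P.toAdd)

end BaseChange

section Division

open Polynomial

variable {R : Type*} [CommRing R]

theorem mul_mem_degreeLT (s : R[X]) {q : R[X]} {n : ℕ} (hq : q ∈ degreeLT R n) :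
    s * q ∈ degreeLT R (s.natDegree + n) := by
  rcases eq_or_ne q 0 with rfl | hq0
  · simp
  rw [mem_degreeLT, degree_eq_natDegree hq0, Nat.cast_lt] at hq
  rw [mem_degreeLT]
  calc (s * q).degree ≤ (s * q).natDegree := degree_le_natDegree
    _ < (s.natDegree + n : ℕ) := Nat.cast_lt.2 (natDegree_mul_le.trans_lt (by gcongr))

theorem exists_eq_add_mul_of_mem_degreeLT {s f : R[X]} {n : ℕ} (hs : IsUnit s.leadingCoeff)
    (hn : s.natDegree ≤ n) (hf : f ∈ degreeLT R (n + 1)) :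
    ∃ r ∈ degreeLT R n, ∃ q ∈ degreeLT R (n + 1 - s.natDegree), f = r + s * q := by
  set q : R[X] := monomial (n - s.natDegree) (↑hs.unit⁻¹ * f.coeff n)
  have hqdeg : q ∈ degreeLT R (n + 1 - s.natDegree) :=
    mem_degreeLT.2 <| (degree_monomial_le _ _).trans_lt <| Nat.cast_lt.2 (by omega)
  have hsq : s * q ∈ degreeLT R (n + 1) := by
    simpa only [Nat.add_sub_cancel' (hn.trans n.le_succ)] using mul_mem_degreeLT s hqdeg
  have hcoeff : (s * q).coeff n = f.coeff n := by
    calc (s * q).coeff n = (s * q).coeff (s.natDegree + (n - s.natDegree)) := by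
          rw [Nat.add_sub_cancel' hn]
      _ = s.leadingCoeff * (↑hs.unit⁻¹ * f.coeff n) := coeff_mul_monomial _ _ _ _
      _ = f.coeff n := by rw [← mul_assoc, hs.mul_val_inv, one_mul]
  refine ⟨f - s * q, ?_, q, hqdeg, (sub_add_cancel _ _).symm⟩
  have hsub : f - s * q ∈ degreeLT R (n + 1) := sub_mem hf hsq
  rw [mem_degreeLT, degree_lt_iff_coeff_zero] at hsub ⊢
  intro m hm
  rcases hm.eq_or_lt with rfl | hlt
  · rw [coeff_sub, hcoeff, sub_self]
  · exact hsub m hlt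

theorem natDegree_X_pow_sub_X_pow [Nontrivial R] {m n : ℕ} (h : m ≠ n) :
    (X ^ m - X ^ n : R[X]).natDegree = max m n := by
  rcases h.lt_or_gt with h | h
  · rw [natDegree_sub_eq_right_of_natDegree_lt (by simpa), natDegree_X_pow, max_eq_right h.le]
  · rw [natDegree_sub_eq_left_of_natDegree_lt (by simpa), natDegree_X_pow, max_eq_left h.le]

theorem isUnit_leadingCoeff_X_pow_sub_X_pow [Nontrivial R] {m n : ℕ} (h : m ≠ n) :
    IsUnit (X ^ m - X ^ n : R[X]).leadingCoeff := by
  rcases h.lt_or_gt with h | h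
  · simp [leadingCoeff_sub_of_degree_lt' (p := (X ^ m : R[X])) (q := X ^ n) (by simpa)]
  · simp [leadingCoeff_sub_of_degree_lt (p := (X ^ m : R[X])) (q := X ^ n) (by simpa)]

end Division

section DegreeStep

open Polynomial

variable {R : Type} [CommRing R]

theorem cubic_mem_of_mem_degreeLT_succ {j : Fin 2} {s : R[X]} {h : ℕ} {σ : V4 R[X] → V4 R[X]}
    {L : AddSubgroup (V4 R[X])} (hs : IsUnit s.leadingCoeff) (hs1 : 1 ≤ s.natDegree)
    (hsh : 2 * s.natDegree ≤ h)
    (hσ : ∀ P, (σ P : MvPolynomial (Fin 2) R[X]) =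
      substAction R[X] (EL2.shear j s : Matrix.SpecialLinearGroup (Fin 2) R[X]) P)
    (hL : ∀ a b, ∀ f ∈ degreeLT R h, cubic a b f ∈ L)
    (hσL : ∀ a b, ∀ f ∈ degreeLT R h, σ (cubic a b f) ∈ L)
    (a : Fin 2) {f : R[X]} (hf : f ∈ degreeLT R (h + 1)) : cubic a j f ∈ L := by
  rcases eq_or_ne a j with rfl | haj
  · obtain ⟨i, hij⟩ := exists_ne a
    obtain ⟨r, hr, q, hq, rfl⟩ := exists_eq_add_mul_of_mem_degreeLT hs (by omega) hf
    replace hq : q ∈ degreeLT R h := degreeLT_mono (by omega) hq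
    rw [map_add, cubic_self_mul_eq hσ hij]
    exact add_mem (hL _ _ r hr) (sub_mem (hσL _ _ q hq) (hL _ _ q hq))
  · have : Nontrivial R := nontrivial_iff.1 <| nontrivial_of_ne s 0 <| by
      rintro rfl
      simp at hs1
    have hs2 : IsUnit (s ^ 2).leadingCoeff := by
      rw [leadingCoeff_pow' (hs.pow 2).ne_zero]
      exact hs.pow 2
    have hdeg : (s ^ 2).natDegree = 2 * s.natDegree := natDegree_pow' (hs.pow 2).ne_zero
    obtain ⟨r, hr, q, hq, rfl⟩ := exists_eq_add_mul_of_mem_degreeLT hs2 (by omega) hf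
    have hsq : s * q ∈ degreeLT R h := degreeLT_mono (by omega) (mul_mem_degreeLT s hq)
    replace hq : q ∈ degreeLT R h := degreeLT_mono (by omega) hq
    rw [map_add, cubic_sq_mul_eq hσ haj]
    exact add_mem (hL _ _ r hr) <| sub_mem (sub_mem (sub_mem (hσL _ _ q hq) (hL _ _ q hq))
      (hσL _ _ _ hsq)) (nsmul_mem (hL _ _ _ hsq) 2)

end DegreeStep

section PolynomialFiltration

open Polynomial Multiplicative

variable {R : Type} [CommRing R]

/-- The cubics spanned by the `f X_a X_j²` with `deg f < k`, written multiplicatively. -/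
noncomputable def cubicsDegreeLT (R : Type) [CommRing R] (j : Fin 2) (k : ℕ) :
    Subgroup (Multiplicative (V4 R[X])) :=
  Subgroup.closure {P | ∃ a, ∃ f ∈ degreeLT R k, ofAdd (cubic a j f) = P}

/-- The cubics all of whose coefficients have degree less than `k`, written multiplicatively. -/
noncomputable def cubicStage (R : Type) [CommRing R] (k : ℕ) :
    Subgroup (Multiplicative (V4 R[X])) :=
  cubicsDegreeLT R 0 k ⊔ cubicsDegreeLT R 1 k

theorem cubicsDegreeLT_le {j : Fin 2} {k : ℕ} {L : Subgroup (Multiplicative (V4 R[X]))}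
    (hL : ∀ a, ∀ f ∈ degreeLT R k, ofAdd (cubic a j f) ∈ L) : cubicsDegreeLT R j k ≤ L := by
  refine (Subgroup.closure_le L).2 ?_
  rintro _ ⟨a, f, hf, rfl⟩
  exact hL a f hf

theorem cubicStage_le {k : ℕ} {L : Subgroup (Multiplicative (V4 R[X]))}
    (hL : ∀ a b, ∀ f ∈ degreeLT R k, ofAdd (cubic a b f) ∈ L) : cubicStage R k ≤ L :=
  sup_le (cubicsDegreeLT_le fun a ↦ hL a 0) (cubicsDegreeLT_le fun a ↦ hL a 1)

theorem ofAdd_cubic_mem_cubicStage (a b : Fin 2) {f : R[X]} {k : ℕ} (hf : f ∈ degreeLT R k) :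
    ofAdd (cubic a b f) ∈ cubicStage R k := by
  have hb : cubicsDegreeLT R b k ≤ cubicStage R k := by
    fin_cases b
    exacts [le_sup_left, le_sup_right]
  exact hb (Subgroup.subset_closure ⟨a, f, hf, rfl⟩)

theorem cubicStage_mono : Monotone (cubicStage R) := fun _ _ h ↦
  cubicStage_le fun a b _ hf ↦ ofAdd_cubic_mem_cubicStage a b (degreeLT_mono h hf)

theorem cubicStage_zero : cubicStage R 0 = ⊥ :=
  eq_bot_iff.2 <| cubicStage_le fun a b f hf ↦ by
    have hf0 : f = 0 := by simpa [mem_degreeLT] using hf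
    simp [hf0]

theorem iSup_cubicStage : ⨆ k, cubicStage R k = ⊤ := by
  refine Subgroup.toAddSubgroup'.injective (eq_top_of_cubic_mem fun a b f ↦ ?_)
  have hf : f ∈ degreeLT R (f.natDegree + 1) :=
    mem_degreeLT.2 (degree_le_natDegree.trans_lt (Nat.cast_lt.2 (Nat.lt_succ_self _)))
  exact le_iSup (cubicStage R) _ (ofAdd_cubic_mem_cubicStage a b hf)

variable {ψ : EL2 R[X] →* MulAut (Multiplicative (V4 R[X]))}

theorem cubicsDegreeLT_succ_le (hψ : IsSubstAction ψ) (j : Fin 2) {s : R[X]}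
    (hs : IsUnit s.leadingCoeff) (hs1 : 1 ≤ s.natDegree) {k : ℕ} (hk : 2 * s.natDegree ≤ k) :
    cubicsDegreeLT R j (k + 1) ≤
      cubicStage R k ⊔ (cubicStage R k).map (ψ (EL2.shear j s)).toMonoidHom := by
  set L := cubicStage R k ⊔ (cubicStage R k).map (ψ (EL2.shear j s)).toMonoidHom
  have hL (a b) (f) (hf : f ∈ degreeLT R k) : ofAdd (cubic a b f) ∈ L :=
    Subgroup.mem_sup_left (ofAdd_cubic_mem_cubicStage a b hf)
  have hσL (a b) (f) (hf : f ∈ degreeLT R k) : ψ (EL2.shear j s) (ofAdd (cubic a b f)) ∈ L :=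
    Subgroup.mem_sup_right (Subgroup.mem_map_of_mem _ (ofAdd_cubic_mem_cubicStage a b hf))
  exact cubicsDegreeLT_le fun a _ hf ↦ cubic_mem_of_mem_degreeLT_succ
    (L := Subgroup.toAddSubgroup' L) hs hs1 hk (hψ (EL2.shear j s)) hL hσL a hf

theorem cubicStage_succ_le [Nontrivial R] (k : ℕ) :
    cubicStage R (k + 1) ≤ cubicStage R k ⊔ (V4.scaledMap C (X ^ k)).toMultiplicative.range := by
  refine cubicStage_le fun a b f hf ↦ ?_
  have hdeg : (X ^ k : R[X]).natDegree = k := natDegree_X_pow k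
  obtain ⟨r, hr, q, hq, rfl⟩ := exists_eq_add_mul_of_mem_degreeLT
    (by simp) hdeg.le hf
  obtain ⟨c, rfl⟩ : ∃ c, C c = q := by
    rw [hdeg, Nat.add_sub_cancel_left, mem_degreeLT, Nat.cast_one] at hq
    exact ⟨_, (eq_C_of_degree_le_zero (Order.lt_succ_iff.1 hq)).symm⟩
  rw [map_add, ofAdd_add]
  refine mul_mem (Subgroup.mem_sup_left (ofAdd_cubic_mem_cubicStage a b hr))
    (Subgroup.mem_sup_right ⟨ofAdd (cubic a b c), ?_⟩)
  exact congrArg ofAdd (V4.scaledMap_cubic _ _ a b c)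

end PolynomialFiltration

section PolynomialExtension

open Polynomial SemidirectProduct

variable {R : Type} [CommRing R] {φ : EL2 R →* MulAut (Multiplicative (V4 R))}
  {ψ : EL2 R[X] →* MulAut (Multiplicative (V4 R[X]))}
  {V : Type} [NormedAddCommGroup V] [InnerProductSpace ℂ V] [CompleteSpace V]
  (π : Multiplicative (V4 R[X]) ⋊[ψ] EL2 R[X] →* (V ≃ₗᵢ[ℂ] V)) {v : V} {δ : ℝ} {n : ℕ}

theorem norm_orthogonal_fixedVectors_cubicStage_le [Nontrivial R] (hφ : IsSubstAction φ)
    (hψ : IsSubstAction ψ) {S : Finset (Multiplicative (V4 R) ⋊[φ] EL2 R)} {ε : ℝ}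
    (hS : IsKazhdanPair φ S ε) (hε : 0 ≤ ε) (hδ : 0 ≤ δ)
    (hv : ∀ k < n, ∀ s ∈ S, ‖π (semidirectScaledMap hφ hψ C (X ^ k) s) v - v‖ < ε * δ) :
    ‖(fixedVectors (π.comp inl) (cubicStage R n))ᗮ.starProjection v‖ ≤ n * δ := by
  refine norm_orthogonal_fixedVectors_le_nsmul _ cubicStage_zero cubicStage_succ_le n fun k hk ↦ ?_
  have hrange : fixedVectors ((π.comp (semidirectScaledMap hφ hψ C (X ^ k))).comp inl) ⊤ =
      fixedVectors (π.comp inl) (V4.scaledMap C (X ^ k)).toMultiplicative.range := by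
    rw [MonoidHom.range_eq_map, ← fixedVectors_comp, MonoidHom.comp_assoc, MonoidHom.comp_assoc,
      semidirectScaledMap, map_comp_inl]
  have hK := hS.norm_orthogonal_starProjection_le
    (π.comp (semidirectScaledMap hφ hψ C (X ^ k))) hε hδ (hv k hk)
  simpa only [hrange] using hK

theorem norm_layerSpan_cubicStage_starProjection_le [Nontrivial R] (hψ : IsSubstAction ψ)
    (j : Fin 2) (hv : ∀ i : Fin (n + 1), ‖π (inr (EL2.shear j (X ^ (i : ℕ)))) v - v‖ ≤ δ) :
    ‖(layerSpan (π.comp inl) (fun k ↦ cubicStage R (k + 2 * n))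
      fun k ↦ cubicsDegreeLT R j (k + 2 * n + 1))ᗮᗮ.starProjection v‖ ≤
      δ + ‖v‖ / √(n + 1) := by
  have hmono : Monotone fun k ↦ cubicStage R (k + 2 * n) :=
    fun _ _ h ↦ cubicStage_mono (Nat.add_le_add_right h _)
  have hshear : Pairwise fun a b : Fin (n + 1) ↦ ∀ k, cubicsDegreeLT R j (k + 2 * n + 1) ≤
      cubicStage R (k + 2 * n) ⊔ (cubicStage R (k + 2 * n)).map
        (ψ ((EL2.shear j (X ^ (a : ℕ)))⁻¹ * EL2.shear j (X ^ (b : ℕ)))).toMonoidHom := by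
    intro a b hab k
    have hba : (b : ℕ) ≠ a := (Fin.val_injective.ne hab).symm
    have hdeg := natDegree_X_pow_sub_X_pow (R := R) hba
    rw [EL2.inv_shear_mul_shear]
    exact cubicsDegreeLT_succ_le hψ j (isUnit_leadingCoeff_X_pow_sub_X_pow hba)
      (by omega) (by omega)
  simpa using norm_layerSpan_starProjection_le π hmono hshear hv

theorem norm_orthogonal_fixedVectors_top_le [Nontrivial R] (hψ : IsSubstAction ψ) {B : ℝ}
    (hB : ‖(fixedVectors (π.comp inl) (cubicStage R (2 * n)))ᗮ.starProjection v‖ ≤ B)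
    (hv : ∀ j, ∀ i : Fin (n + 1), ‖π (inr (EL2.shear j (X ^ (i : ℕ)))) v - v‖ ≤ δ) :
    ‖(fixedVectors (π.comp inl) ⊤)ᗮ.starProjection v‖ ≤ B + 2 * (δ + ‖v‖ / √(n + 1)) := by
  have htop : ⨆ k, cubicStage R (k + 2 * n) = ⊤ :=
    (cubicStage_mono.iSup_nat_add _).trans iSup_cubicStage
  have hlayers := norm_orthogonal_fixedVectors_iSup_le (π.comp inl)
    (N := fun k ↦ cubicStage R (k + 2 * n)) (T := fun k ↦ cubicsDegreeLT R 0 (k + 2 * n + 1))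
    (T' := fun k ↦ cubicsDegreeLT R 1 (k + 2 * n + 1))
    (fun k ↦ (congrArg (cubicStage R) (by omega)).le) v
  simp only [htop, zero_add] at hlayers
  linarith [norm_layerSpan_cubicStage_starProjection_le π hψ 0 (hv 0),
    norm_layerSpan_cubicStage_starProjection_le π hψ 1 (hv 1)]

theorem exists_ne_zero_forall_apply_inl_eq [Nontrivial R] (hφ : IsSubstAction φ)
    (hψ : IsSubstAction ψ) {S : Finset (Multiplicative (V4 R) ⋊[φ] EL2 R)} {ε : ℝ}
    (hS : IsKazhdanPair φ S ε) (hε : 0 ≤ ε) (hv1 : ‖v‖ = 1)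
    (hscaled : ∀ k < 2 * 8, ∀ s ∈ S,
      ‖π (semidirectScaledMap hφ hψ C (X ^ k) s) v - v‖ < ε * (1 / 60))
    (hshear : ∀ j, ∀ i : Fin (8 + 1), ‖π (inr (EL2.shear j (X ^ (i : ℕ)))) v - v‖ ≤ 1 / 60) :
    ∃ w : V, w ≠ 0 ∧ ∀ P, π (inl P) w = w := by
  have hB := norm_orthogonal_fixedVectors_cubicStage_le π hφ hψ hS hε (by norm_num) hscaled
  have hsqrt : √((8 : ℕ) + 1 : ℝ) = 3 := by
    rw [show ((8 : ℕ) + 1 : ℝ) = 3 ^ 2 by norm_num, Real.sqrt_sq (by norm_num)]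
  -- The bounds add up to `16 / 60 + 2 * (1 / 60 + 1 / 3) = 58 / 60`.
  have hlt : ‖(fixedVectors (π.comp inl) ⊤)ᗮ.starProjection v‖ < ‖v‖ := by
    refine (norm_orthogonal_fixedVectors_top_le π hψ hB hshear).trans_lt ?_
    rw [hsqrt, hv1]
    norm_num
  refine ⟨(fixedVectors (π.comp inl) ⊤).starProjection v, fun h0 ↦ hlt.ne ?_, fun P ↦ ?_⟩
  · rw [Submodule.starProjection_orthogonal_val, h0, sub_zero]
  · exact (fixedVectors (π.comp inl) ⊤).starProjection_apply_mem v P trivial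

theorem stmt_17_general (hφ : IsSubstAction φ) (hT : RelPropertyT φ) (hψ : IsSubstAction ψ) :
    RelPropertyT ψ := by
  classical
  rcases subsingleton_or_nontrivial R with hR | hR
  · have : Subsingleton (V4 R[X]) := Module.subsingleton R[X] _
    exact relPropertyT_of_subsingleton (N := Multiplicative (V4 R[X])) ψ
  obtain ⟨S, ε, hε, hS : IsKazhdanPair φ S ε⟩ := hT
  let scaled : Finset (Multiplicative (V4 R[X]) ⋊[ψ] EL2 R[X]) :=
    (Finset.range 16).biUnion fun k ↦ S.image (semidirectScaledMap hφ hψ C (X ^ k))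
  let shears : Finset (Multiplicative (V4 R[X]) ⋊[ψ] EL2 R[X]) :=
    Finset.univ.image fun p : Fin 2 × Fin 9 ↦ inr (EL2.shear p.1 (X ^ (p.2 : ℕ)))
  refine ⟨scaled ∪ shears, min (1 / 60) (ε * (1 / 60)), by positivity, ?_⟩
  rintro V _ _ _ π ⟨v, hv1, hv⟩
  refine exists_ne_zero_forall_apply_inl_eq π hφ hψ hS hε.le hv1 (fun k hk s hs ↦ ?_)
    fun j i ↦ ?_
  · exact (hv _ (Finset.mem_union_left _ (Finset.mem_biUnion.2
      ⟨k, Finset.mem_range.2 hk, Finset.mem_image_of_mem _ hs⟩))).trans_le (min_le_right _ _)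
  · exact (hv _ (Finset.mem_union_right _ (Finset.mem_image_of_mem _
      (Finset.mem_univ (j, i))))).le.trans (min_le_left _ _)

end PolynomialExtension

/-- Proposition A.5: relative property (T) passes from
(EL₂(R) ⋉ V₄(R), V₄(R)) to (EL₂(R[t]) ⋉ V₄(R[t]), V₄(R[t])) for
R = ℤ[x₁, …, x_l]. -/
theorem stmt_17 (l : ℕ)
    (φ : ↥(EL2 (MvPolynomial (Fin l) ℤ)) →*
      MulAut (Multiplicative ↥(V4 (MvPolynomial (Fin l) ℤ))))
    (hφ : ∀ (g : ↥(EL2 (MvPolynomial (Fin l) ℤ))) (P : ↥(V4 (MvPolynomial (Fin l) ℤ))),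
      ((Multiplicative.toAdd (φ g (Multiplicative.ofAdd P))
          : ↥(V4 (MvPolynomial (Fin l) ℤ))) : MvPolynomial (Fin 2) (MvPolynomial (Fin l) ℤ))
        = substAction (MvPolynomial (Fin l) ℤ)
            ((g : Matrix.SpecialLinearGroup (Fin 2) (MvPolynomial (Fin l) ℤ)) :
              Matrix (Fin 2) (Fin 2) (MvPolynomial (Fin l) ℤ))
            (P : MvPolynomial (Fin 2) (MvPolynomial (Fin l) ℤ)))
    (hT : RelPropertyT φ)
    (ψ : ↥(EL2 (Polynomial (MvPolynomial (Fin l) ℤ))) →*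
      MulAut (Multiplicative ↥(V4 (Polynomial (MvPolynomial (Fin l) ℤ)))))
    (hψ : ∀ (g : ↥(EL2 (Polynomial (MvPolynomial (Fin l) ℤ))))
        (P : ↥(V4 (Polynomial (MvPolynomial (Fin l) ℤ)))),
      ((Multiplicative.toAdd (ψ g (Multiplicative.ofAdd P))
          : ↥(V4 (Polynomial (MvPolynomial (Fin l) ℤ))))
          : MvPolynomial (Fin 2) (Polynomial (MvPolynomial (Fin l) ℤ)))
        = substAction (Polynomial (MvPolynomial (Fin l) ℤ))
            ((g : Matrix.SpecialLinearGroup (Fin 2) (Polynomial (MvPolynomial (Fin l) ℤ))) :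
              Matrix (Fin 2) (Fin 2) (Polynomial (MvPolynomial (Fin l) ℤ)))
            (P : MvPolynomial (Fin 2) (Polynomial (MvPolynomial (Fin l) ℤ)))) :
    RelPropertyT ψ :=
  stmt_17_general hφ hT hψ
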